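/- arXiv:1502.01413 — 3 statements merged into one kernel-verified Lean document; each statement's English description precedes it below -/
import Mathlib

section
/- Let (X,Y) have the bivariate normal distribution N₂(0,Σ) with density φ_{X,Y}(x,y;ρ) = (2π)^{−1}(1−ρ²)^{−1/2} exp(−(x² + y² − 2ρxy)/(2(1−ρ²))), where |ρ| < 1. Then V²(X,Y) = (4/π) Σ_{ℓ=1}^∞ ((2ℓ−3)!!)² / (2ℓ)! · (1 − 2^{−(2ℓ−1)}) · ρ^{2ℓ}, and this series converges absolutely for all ρ ∈ (−1,1). -/
/-! The characteristic function of the centred bivariate normal law is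
`ψ(s,t) = exp (-(s² + t² + 2ρst)/2)` (`jointCF_bvnDensity`, by completing the square twice), so with
`u = ρst` the integrand of `V²` is `e^{-(s²+t²)} (e^{-u} - 1)² / (s²t²)`.
It is integrable because `2|u| ≤ |ρ|(s² + t²)` with `|ρ| < 1` (`integrable_dcovIntegrand`).
Averaging over the reflection `s ↦ -s` removes the odd part in `u`
and replaces `(e^{-u} - 1)²` by `cosh 2u - 2 cosh u + 1`, whose Taylor series
`∑_{ℓ≥1} (4^ℓ - 2) u^{2ℓ}/(2ℓ)!` has nonnegative terms. Each term factors into Gaussian moments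
`∫ s^{2m} e^{-s²} ds = (2m-1)!! √π / 2^m` (`integral_even_pow_mul_gauss`), and
exchanging sum and integral is justified by nonnegativity together with the convergence
of the resulting series, which is dominated by a geometric series because
`((2ℓ-3)!!)² ≤ (2ℓ)!`. -/

open MeasureTheory

/-- The bivariate normal density with standard normal marginals and correlation `ρ`. -/
noncomputable def bvnDensity (ρ x y : ℝ) : ℝ :=
  (2 * Real.pi)⁻¹ * (1 - ρ ^ 2) ^ (-(1/2 : ℝ)) *
    Real.exp (-(x ^ 2 + y ^ 2 - 2 * ρ * x * y) / (2 * (1 - ρ ^ 2)))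

/-- Joint characteristic function of a pair of real random variables with joint density `φ`. -/
noncomputable def jointCF₁ (φ : ℝ → ℝ → ℝ) (s t : ℝ) : ℂ :=
  ∫ z : ℝ × ℝ, Complex.exp (Complex.I * (s * z.1 + t * z.2)) * (φ z.1 z.2 : ℝ)

/-- Squared distance covariance `V²(X,Y)` of a pair of real random variables with joint
density `φ`; here `γ₁ = π` and the marginal characteristic functions are
`ψ_X(s) = ψ_{X,Y}(s,0)` and `ψ_Y(t) = ψ_{X,Y}(0,t)`. -/
noncomputable def dcov₁ (φ : ℝ → ℝ → ℝ) : ℝ :=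
  (Real.pi * Real.pi)⁻¹ *
    ∫ w : ℝ × ℝ, ‖jointCF₁ φ w.1 w.2 - jointCF₁ φ w.1 0 * jointCF₁ φ 0 w.2‖ ^ 2 /
      (w.1 ^ 2 * w.2 ^ 2)

/-! ### Convergence of the series -/

/-- The `ℓ`-th term of the series, with the summation index starting at `0`. -/
noncomputable def dcovTerm (ρ : ℝ) (ℓ : ℕ) : ℝ :=
  ((Nat.doubleFactorial (2 * (ℓ + 1) - 3) : ℝ) ^ 2 / (Nat.factorial (2 * (ℓ + 1)))) *
    (1 - ((2 : ℝ) ^ (2 * (ℓ + 1) - 1))⁻¹) * ρ ^ (2 * (ℓ + 1))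

/-- The closed form of the integrand of `V²`; like the original it takes the junk value `0`
on the two axes. -/
noncomputable def dcovIntegrand (ρ : ℝ) (w : ℝ × ℝ) : ℝ :=
  Real.exp (-(w.1 ^ 2 + w.2 ^ 2)) * (Real.exp (-(ρ * w.1 * w.2)) - 1) ^ 2 / (w.1 ^ 2 * w.2 ^ 2)

lemma doubleFactorial_sq_le_factorial (ℓ : ℕ) :
    (Nat.doubleFactorial (2 * (ℓ + 1) - 3)) ^ 2 ≤ Nat.factorial (2 * (ℓ + 1)) := by
  induction ℓ with
  | zero => simp
  | succ n ih =>
    have h1 : 2 * (n + 1 + 1) - 3 = 2 * n + 1 := by omega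
    have h2 : 2 * (n + 1) - 3 = 2 * n - 1 := by omega
    have h3 : 2 * (n + 1 + 1) = 2 * (n + 1) + 1 + 1 := by ring
    rw [h2] at ih
    rw [h1, Nat.doubleFactorial_add_one, h3, Nat.factorial_succ, Nat.factorial_succ, mul_pow,
      ← mul_assoc]
    exact Nat.mul_le_mul (by nlinarith) ih

lemma dcovTerm_nonneg (ρ : ℝ) (ℓ : ℕ) : 0 ≤ dcovTerm ρ ℓ := by
  unfold dcovTerm
  have h1 : ((2 : ℝ) ^ (2 * (ℓ + 1) - 1))⁻¹ ≤ 1 :=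
    inv_le_one_of_one_le₀ (one_le_pow₀ (by norm_num))
  have h2 : 0 ≤ ρ ^ (2 * (ℓ + 1)) := (even_two_mul _).pow_nonneg ρ
  have h3 := sub_nonneg.2 h1
  positivity

lemma summable_dcovTerm {ρ : ℝ} (hρ : |ρ| < 1) : Summable (dcovTerm ρ) := by
  have hsq : ρ ^ 2 < 1 := (sq_lt_one_iff_abs_lt_one ρ).2 hρ
  refine Summable.of_nonneg_of_le (dcovTerm_nonneg ρ) (fun ℓ => ?_)
    ((summable_geometric_of_lt_one (sq_nonneg ρ) hsq).comp_injective (add_left_injective 1))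
  have h1 : ((2 : ℝ) ^ (2 * (ℓ + 1) - 1))⁻¹ ≤ 1 :=
    inv_le_one_of_one_le₀ (one_le_pow₀ (by norm_num))
  have h1' : 0 ≤ ((2 : ℝ) ^ (2 * (ℓ + 1) - 1))⁻¹ := by positivity
  have h2 : ((Nat.doubleFactorial (2 * (ℓ + 1) - 3) : ℝ) ^ 2 / (Nat.factorial (2 * (ℓ + 1)))) ≤ 1 :=
    div_le_one_of_le₀ (by exact_mod_cast doubleFactorial_sq_le_factorial ℓ) (by positivity)
  unfold dcovTerm
  simp only [Function.comp_apply]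
  rw [pow_mul]
  refine mul_le_of_le_one_left (by positivity) (mul_le_one₀ h2 (by linarith) (by linarith))

/-! ### The characteristic function -/

lemma integrable_gauss_prod {b : ℝ} (hb : 0 < b) :
    Integrable (fun w : ℝ × ℝ => Real.exp (-b * (w.1 ^ 2 + w.2 ^ 2))) := by
  have h := (integrable_exp_neg_mul_sq hb).mul_prod (integrable_exp_neg_mul_sq hb)
  refine h.congr (Filter.Eventually.of_forall fun w => ?_)
  simp only [← Real.exp_add]
  ring_nf

lemma two_mul_abs_le (ρ x y : ℝ) : 2 * |ρ * x * y| ≤ |ρ| * (x ^ 2 + y ^ 2) := by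
  rw [abs_mul, abs_mul, mul_assoc]
  rw [← sq_abs x, ← sq_abs y]
  nlinarith [mul_nonneg (abs_nonneg ρ) (sq_nonneg (|x| - |y|))]

lemma integrable_jointCF_integrand {ρ : ℝ} (hρ : |ρ| < 1) (s t : ℝ) :
    Integrable (fun z : ℝ × ℝ =>
      Complex.exp (Complex.I * (s * z.1 + t * z.2)) * (bvnDensity ρ z.1 z.2 : ℝ)) := by
  have hq : 0 < 1 - ρ ^ 2 := by linarith [(sq_lt_one_iff_abs_lt_one ρ).2 hρ]
  have hb : 0 < (1 - |ρ|) / (2 * (1 - ρ ^ 2)) := div_pos (by linarith) (by linarith)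
  refine ((integrable_gauss_prod hb).const_mul
    ((2 * Real.pi)⁻¹ * (1 - ρ ^ 2) ^ (-(1/2 : ℝ)))).mono' ?_ ?_
  · unfold bvnDensity
    exact Continuous.aestronglyMeasurable (by fun_prop)
  · refine Filter.Eventually.of_forall fun z => ?_
    have h1 : ‖Complex.exp (Complex.I * (s * z.1 + t * z.2))‖ = 1 := by
      rw [mul_comm]; exact_mod_cast Complex.norm_exp_ofReal_mul_I (s * z.1 + t * z.2)
    rw [norm_mul, h1, one_mul, Complex.norm_real, Real.norm_eq_abs, bvnDensity, abs_of_nonneg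
      (by positivity)]
    gcongr
    rw [neg_mul, div_mul_eq_mul_div, ← neg_div]
    gcongr
    have := two_mul_abs_le ρ z.1 z.2
    linarith [le_abs_self (ρ * z.1 * z.2)]

/-- Completing the square in each variable in turn gives the joint characteristic function. -/
lemma jointCF_bvnDensity {ρ : ℝ} (hρ : |ρ| < 1) (s t : ℝ) :
    jointCF₁ (bvnDensity ρ) s t = (Real.exp (-(s ^ 2 + t ^ 2 + 2 * ρ * s * t) / 2) : ℝ) := by
  have hq : 0 < 1 - ρ ^ 2 := by linarith [(sq_lt_one_iff_abs_lt_one ρ).2 hρ]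
  have hi := integrable_jointCF_integrand hρ s t
  unfold jointCF₁
  rw [Measure.volume_eq_prod] at hi ⊢
  rw [integral_prod _ hi]
  obtain ⟨q, hqdef⟩ : ∃ q : ℝ, q = 1 - ρ ^ 2 := ⟨_, rfl⟩
  have hq0 : 0 < q := hqdef ▸ hq
  have hqc : (q : ℂ) ≠ 0 := by exact_mod_cast hq0.ne'
  have hρq : (ρ : ℂ) ^ 2 = 1 - q := by rw [hqdef]; push_cast; ring
  have inner (x : ℝ) : ∫ y : ℝ, Complex.exp (Complex.I * (s * x + t * y)) * (bvnDensity ρ x y : ℝ) =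
      ((2 * Real.pi) ^ (-(1/2 : ℝ)) : ℝ) * Complex.exp ((-1/2 : ℂ) * x ^ 2 +
        (Complex.I * (s + ρ * t)) * x + (- t ^ 2 * q / 2)) := by
    have e (y : ℝ) : Complex.exp (Complex.I * (s * x + t * y)) * (bvnDensity ρ x y : ℝ) =
        ((2 * Real.pi)⁻¹ * q ^ (-(1/2 : ℝ)) : ℝ) *
          Complex.exp ((-1 / (2 * q) : ℂ) * y ^ 2 + (Complex.I * t + ρ * x / q) * y +
            (Complex.I * s * x - x ^ 2 / (2 * q))) := by
      rw [bvnDensity, ← hqdef, Complex.ofReal_mul, mul_left_comm, Complex.ofReal_exp,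
        ← Complex.exp_add]
      congr 2
      push_cast
      field_simp
      ring
    simp_rw [e]
    rw [integral_const_mul, integral_cexp_quadratic]
    · have h1 : (Real.pi : ℂ) / -(-1 / (2 * q)) = ((2 * Real.pi * q : ℝ) : ℂ) := by
        push_cast; field_simp
      have h2 : ((2 * Real.pi * q : ℝ) : ℂ) ^ (1 / 2 : ℂ) =
          (((2 * Real.pi * q) ^ (1 / 2 : ℝ) : ℝ) : ℂ) := by
        rw [Complex.ofReal_cpow (by positivity)]; norm_num
      rw [h1, h2, ← mul_assoc, ← Complex.ofReal_mul]
      congr 2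
      · rw [Real.mul_rpow (by positivity) hq0.le, Real.rpow_neg hq0.le,
          Real.rpow_neg (by positivity), ← Real.sqrt_eq_rpow, ← Real.sqrt_eq_rpow]
        have h3 : √q ≠ 0 := by positivity
        have h4 : √(2 * Real.pi) ≠ 0 := by positivity
        have h5 : √(2 * Real.pi) ^ 2 = 2 * Real.pi := Real.sq_sqrt (by positivity)
        rw [← h5]
        simp only [Real.sqrt_sq (Real.sqrt_nonneg _)]
        field_simp
      · field_simp
        ring_nf
        simp only [Complex.I_sq, hρq]
        ring
    · have : (-1 / (2 * q) : ℂ) = ((-1 / (2 * q) : ℝ) : ℂ) := by push_cast; rfl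
      rw [this, Complex.ofReal_re]
      exact div_neg_of_neg_of_pos (by norm_num) (by positivity)
  simp_rw [inner]
  rw [integral_const_mul, integral_cexp_quadratic (by norm_num)]
  have h1 : (Real.pi : ℂ) / -(-1 / 2) = ((2 * Real.pi : ℝ) : ℂ) := by
    push_cast; ring
  have h2 : ((2 * Real.pi : ℝ) : ℂ) ^ (1 / 2 : ℂ) =
      (((2 * Real.pi) ^ (1 / 2 : ℝ) : ℝ) : ℂ) := by
    rw [Complex.ofReal_cpow (by positivity)]; norm_num
  rw [h1, h2, ← mul_assoc, ← Complex.ofReal_mul, ← Real.rpow_add (by positivity)]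
  norm_num
  congr 1
  ring_nf
  simp only [Complex.I_sq]
  have : (q : ℂ) = 1 - ρ ^ 2 := by rw [hρq]; ring
  rw [this]
  ring

/-! ### Integrability of the integrand of `V²` -/

/-- The integrand is bounded by a Gaussian, since `(e^v - 1)² ≤ v² e^{2|v|}`. -/
lemma integrable_dcovIntegrand {ρ : ℝ} (hρ : |ρ| < 1) : Integrable (dcovIntegrand ρ) := by
  refine ((integrable_gauss_prod (sub_pos.2 hρ)).const_mul (ρ ^ 2)).mono' ?_ ?_
  · unfold dcovIntegrand
    exact Measurable.aestronglyMeasurable (by fun_prop)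
  · refine Filter.Eventually.of_forall fun w => ?_
    obtain ⟨s, t⟩ := w
    have key (v : ℝ) : (Real.exp v - 1) ^ 2 ≤ v ^ 2 * Real.exp (2 * |v|) := by
      have h : |Real.exp v - 1| ≤ |v| * Real.exp |v| := by
        have h0 := Real.add_one_le_exp v
        have h1 := Real.add_one_le_exp (-v)
        have h2 : Real.exp v * Real.exp (-v) = 1 := by rw [← Real.exp_add]; simp
        have h3 := Real.exp_pos v
        have h4 := Real.one_le_exp (abs_nonneg v)
        have h5 := Real.exp_le_exp.2 (le_abs_self v)
        refine abs_le.2 ⟨?_, ?_⟩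
        · nlinarith [abs_nonneg v, neg_abs_le v]
        · nlinarith [abs_nonneg v, le_abs_self v]
      have h' := pow_le_pow_left₀ (abs_nonneg _) h 2
      rw [sq_abs, mul_pow, sq_abs, ← Real.exp_nat_mul] at h'
      exact_mod_cast h'
    have hn : 0 ≤ dcovIntegrand ρ (s, t) := by unfold dcovIntegrand; positivity
    rw [Real.norm_of_nonneg hn]
    simp only [dcovIntegrand]
    refine div_le_of_le_mul₀ (by positivity) (by positivity) ?_
    have h1 := key (-(ρ * s * t))
    rw [abs_neg] at h1
    have h2 := two_mul_abs_le ρ s t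
    calc _ ≤ Real.exp (-(s ^ 2 + t ^ 2)) *
          ((-(ρ * s * t)) ^ 2 * Real.exp (|ρ| * (s ^ 2 + t ^ 2))) := by
          gcongr
          exact h1.trans (by gcongr)
      _ = _ := by
          have : -(1 - |ρ|) * (s ^ 2 + t ^ 2) = -(s ^ 2 + t ^ 2) + |ρ| * (s ^ 2 + t ^ 2) := by ring
          rw [this, Real.exp_add]
          ring

/-! ### Gaussian moments and termwise integration -/

lemma integrable_even_pow_mul_gauss (m : ℕ) :
    Integrable (fun x : ℝ => x ^ (2 * m) * Real.exp (-x ^ 2)) := by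
  have h := integrable_rpow_mul_exp_neg_mul_sq one_pos (s := ((2 * m : ℕ) : ℝ))
    (by linarith [Nat.cast_nonneg (α := ℝ) (2 * m)])
  simpa only [Real.rpow_natCast, neg_one_mul] using h

lemma integral_even_pow_mul_gauss (m : ℕ) :
    ∫ x : ℝ, x ^ (2 * m) * Real.exp (-x ^ 2) =
      (Nat.doubleFactorial (2 * m - 1) : ℝ) * √Real.pi / 2 ^ m := by
  have h1 := integral_comp_abs (f := fun x : ℝ => x ^ (2 * m) * Real.exp (-x ^ 2))
  have h2 := integral_rpow_mul_exp_neg_rpow (p := 2) (q := ((2 * m : ℕ) : ℝ)) (by norm_num)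
    (by linarith [Nat.cast_nonneg (α := ℝ) (2 * m)])
  simp only [Real.rpow_natCast, Real.rpow_two] at h2
  simp only [(even_two_mul m).pow_abs, sq_abs] at h1
  rw [h1, h2, ← Real.Gamma_nat_add_half]
  push_cast
  rw [show (2 * (m : ℝ) + 1) / 2 = m + 1 / 2 by ring]
  ring

/-- The `ℓ`-th term of the Taylor expansion of the symmetrised integrand. -/
noncomputable def dcovPiece (ρ : ℝ) (ℓ : ℕ) (w : ℝ × ℝ) : ℝ :=
  (4 ^ (ℓ + 1) - 2) * ρ ^ (2 * (ℓ + 1)) / (Nat.factorial (2 * (ℓ + 1))) *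
    ((w.1 ^ (2 * ℓ) * Real.exp (-w.1 ^ 2)) * (w.2 ^ (2 * ℓ) * Real.exp (-w.2 ^ 2)))

lemma dcovPiece_nonneg (ρ : ℝ) (ℓ : ℕ) (w : ℝ × ℝ) : 0 ≤ dcovPiece ρ ℓ w := by
  unfold dcovPiece
  have h0 : (0 : ℝ) ≤ 4 ^ (ℓ + 1) - 2 := by
    have : (1 : ℝ) ≤ 4 ^ ℓ := one_le_pow₀ (by norm_num)
    rw [pow_succ]; linarith
  simp only [pow_mul]
  positivity

lemma integrable_dcovPiece (ρ : ℝ) (ℓ : ℕ) : Integrable (dcovPiece ρ ℓ) :=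
  ((integrable_even_pow_mul_gauss ℓ).mul_prod (integrable_even_pow_mul_gauss ℓ)).const_mul _

lemma integral_dcovPiece (ρ : ℝ) (ℓ : ℕ) :
    ∫ w, dcovPiece ρ ℓ w = 4 * Real.pi * dcovTerm ρ ℓ := by
  unfold dcovPiece dcovTerm
  rw [integral_const_mul, Measure.volume_eq_prod,
    integral_prod_mul (fun x : ℝ => x ^ (2 * ℓ) * Real.exp (-x ^ 2))
      (fun x : ℝ => x ^ (2 * ℓ) * Real.exp (-x ^ 2)), integral_even_pow_mul_gauss]
  have h1 : 2 * (ℓ + 1) - 3 = 2 * ℓ - 1 := by omega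
  have h2 : 2 * (ℓ + 1) - 1 = 2 * ℓ + 1 := by omega
  have h3 : (4 : ℝ) ^ ℓ = 2 ^ ℓ * 2 ^ ℓ := by rw [← mul_pow]; norm_num
  have h4 : √Real.pi * √Real.pi = Real.pi := Real.mul_self_sqrt Real.pi_pos.le
  have h5 : (2 : ℝ) ^ (2 * ℓ + 1) = 2 ^ ℓ * 2 ^ ℓ * 2 := by ring
  rw [h1, h2, h5, pow_succ (4 : ℝ), h3]
  nth_rewrite 3 [← h4]
  field_simp
  ring

/-! ### Symmetrisation and exchange of sum and integral -/

/-- Off the axes, the symmetrised integrand is the sum of its Taylor terms. -/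
lemma hasSum_dcovPiece (ρ : ℝ) {s t : ℝ} (hs : s ≠ 0) (ht : t ≠ 0) :
    HasSum (fun ℓ => dcovPiece ρ ℓ (s, t))
      ((dcovIntegrand ρ (s, t) + dcovIntegrand ρ (-s, t)) / 2) := by
  set u := ρ * s * t with hu
  have h := (Real.hasSum_cosh (2 * u)).sub ((Real.hasSum_cosh u).mul_left 2)
  rw [← hasSum_nat_add_iff' 1] at h
  have h' := h.mul_left (Real.exp (-(s ^ 2 + t ^ 2)) / (s ^ 2 * t ^ 2))
  suffices hfv : (fun ℓ => dcovPiece ρ ℓ (s, t)) = _ ∧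
      (dcovIntegrand ρ (s, t) + dcovIntegrand ρ (-s, t)) / 2 = _ by
    rw [hfv.1, hfv.2]
    exact h'
  constructor
  · ext ℓ
    simp only [dcovPiece, hu]
    rw [show -(s ^ 2 + t ^ 2) = -s ^ 2 + -t ^ 2 by ring, Real.exp_add,
      mul_pow 2, pow_mul 2 2 (ℓ + 1), show (2 : ℝ) ^ 2 = 4 by norm_num]
    field_simp
    ring
  · simp only [dcovIntegrand, Finset.sum_range_one]
    have e1 : Real.exp (-(ρ * -s * t)) = Real.exp u := by rw [hu]; ring_nf
    have e2 : Real.exp (2 * u) = Real.exp u ^ 2 := by rw [← Real.exp_nat_mul]; norm_num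
    have e3 : Real.exp (-(2 * u)) = Real.exp (-u) ^ 2 := by
      rw [← Real.exp_nat_mul]; congr 1; push_cast; ring
    rw [e1, ← hu, Real.cosh_eq, Real.cosh_eq, e2, e3, neg_sq]
    simp
    ring

lemma integral_dcovIntegrand {ρ : ℝ} (hρ : |ρ| < 1) :
    ∫ w, dcovIntegrand ρ w = 4 * Real.pi * ∑' ℓ, dcovTerm ρ ℓ := by
  -- The reflection `(s, t) ↦ (-s, t)` preserves Lebesgue measure.
  have hmp : MeasurePreserving (fun w : ℝ × ℝ => (-w.1, w.2)) :=
    (Measure.measurePreserving_neg (volume : Measure ℝ)).prod (MeasurePreserving.id volume)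
  have hemb : MeasurableEmbedding (fun w : ℝ × ℝ => (-w.1, w.2)) :=
    ((MeasurableEquiv.neg ℝ).prodCongr (MeasurableEquiv.refl ℝ)).measurableEmbedding
  have hint := integrable_dcovIntegrand hρ
  have hint' : Integrable (fun w : ℝ × ℝ => dcovIntegrand ρ (-w.1, w.2)) :=
    (hmp.integrable_comp_emb hemb).2 hint
  have href : ∫ w : ℝ × ℝ, dcovIntegrand ρ (-w.1, w.2) = ∫ w, dcovIntegrand ρ w :=
    hmp.integral_comp hemb (dcovIntegrand ρ)
  have hsym : ∫ w, dcovIntegrand ρ w =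
      ∫ w : ℝ × ℝ, (dcovIntegrand ρ (w.1, w.2) + dcovIntegrand ρ (-w.1, w.2)) / 2 := by
    rw [integral_div, integral_add hint hint', href]
    ring
  have hae : ∀ᵐ w : ℝ × ℝ, w.1 ≠ 0 ∧ w.2 ≠ 0 := by
    have h0 : ∀ᵐ x : ℝ, x ≠ 0 := Measure.ae_ne volume 0
    exact (Measure.quasiMeasurePreserving_fst.ae h0).and (Measure.quasiMeasurePreserving_snd.ae h0)
  have hsum : Summable fun ℓ => ∫ w, ‖dcovPiece ρ ℓ w‖ := by
    simp only [Real.norm_of_nonneg (dcovPiece_nonneg _ _ _), integral_dcovPiece]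
    exact (summable_dcovTerm hρ).mul_left _
  have hH := (hasSum_integral_of_summable_integral_norm (integrable_dcovPiece ρ) hsum).tsum_eq
  simp only [integral_dcovPiece, tsum_mul_left] at hH
  rw [hH, hsym]
  refine integral_congr_ae (hae.mono fun w hw => ?_)
  exact (hasSum_dcovPiece ρ hw.1 hw.2).tsum_eq.symm

lemma dcov_bvnDensity {ρ : ℝ} (hρ : |ρ| < 1) :
    dcov₁ (bvnDensity ρ) = (Real.pi * Real.pi)⁻¹ * ∫ w, dcovIntegrand ρ w := by
  unfold dcov₁
  congr 2
  ext ⟨s, t⟩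
  simp only [jointCF_bvnDensity hρ, dcovIntegrand]
  rw [← Complex.ofReal_mul, ← Complex.ofReal_sub, Complex.norm_real, Real.norm_eq_abs, sq_abs,
    ← Real.exp_add]
  have h1 : -(s ^ 2 + t ^ 2 + 2 * ρ * s * t) / 2 = -(s ^ 2 + t ^ 2) / 2 + -(ρ * s * t) := by ring
  have h2 : -(s ^ 2 + 0 ^ 2 + 2 * ρ * s * 0) / 2 + -(0 ^ 2 + t ^ 2 + 2 * ρ * 0 * t) / 2 =
    -(s ^ 2 + t ^ 2) / 2 := by ring
  have h3 : Real.exp (-(s ^ 2 + t ^ 2)) = Real.exp (-(s ^ 2 + t ^ 2) / 2) ^ 2 := by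
    rw [← Real.exp_nat_mul]; congr 1; push_cast; ring
  rw [h1, h2, h3, Real.exp_add]
  ring

/-- **Distance covariance of the bivariate normal distribution** (series form):
`V²(X,Y) = (4/π) Σ_{ℓ≥1} ((2ℓ−3)!!)²/(2ℓ)! (1 − 2^{−(2ℓ−1)}) ρ^{2ℓ}`,
and the series converges absolutely for all `ρ ∈ (−1,1)`. -/
theorem dcov_bivariate_normal (ρ : ℝ) (hρ : ρ ∈ Set.Ioo (-1 : ℝ) 1) :
    dcov₁ (bvnDensity ρ) =
      4 / Real.pi * ∑' ℓ : ℕ,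
        ((Nat.doubleFactorial (2 * (ℓ + 1) - 3) : ℝ) ^ 2 / (Nat.factorial (2 * (ℓ + 1)))) *
          (1 - ((2 : ℝ) ^ (2 * (ℓ + 1) - 1))⁻¹) * ρ ^ (2 * (ℓ + 1)) ∧
    Summable (fun ℓ : ℕ =>
      |((Nat.doubleFactorial (2 * (ℓ + 1) - 3) : ℝ) ^ 2 / (Nat.factorial (2 * (ℓ + 1)))) *
        (1 - ((2 : ℝ) ^ (2 * (ℓ + 1) - 1))⁻¹) * ρ ^ (2 * (ℓ + 1))|) := by
  have hρ' : |ρ| < 1 := abs_lt.2 hρ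
  refine ⟨?_, (summable_dcovTerm hρ').abs⟩
  rw [dcov_bvnDensity hρ', integral_dcovIntegrand hρ']
  simp only [dcovTerm]
  field_simp
end

section
/- Let X be a standard normal random variable. Then the squared distance variance satisfies V²(X,X) = 4/3 − 4(√3 − 1)/π. (This is the limit as ρ → 1− of the bivariate normal distance covariance V²(X,Y) for correlation ρ.) -/
/-!
The characteristic function is `exp (-s² / 2)`, so the integrand equals
`exp (-(s² + t²)) * ((1 - exp (-s t)) / (s t))²`. Since `(1 - exp (-x)) / x = ∫₀¹ exp (-a x) da`,
it is the integral over `(a, b) ∈ (0, 1)²` of `exp (-(s² + t² + (a + b) s t))`. By Tonelli the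
Gaussian integral in `(s, t)` can be taken first; it equals `2π / √(4 - (a + b)²)`. This is the
second derivative of `x ↦ 2π (x arcsin (x / 2) + √(4 - x²))` at `x = a + b`, so the remaining
integral over the unit square is a second difference of that function at `0, 1, 2`. Everything
is nonnegative, and the computation is done with Lebesgue integrals in `ℝ≥0∞`.
-/

open MeasureTheory

/-- The characteristic function of a real random variable with density `φ`. -/
noncomputable def margCF₁ (φ : ℝ → ℝ) (s : ℝ) : ℂ :=
  ∫ x : ℝ, Complex.exp (Complex.I * (s * x)) * (φ x : ℝ)

/-- The standard normal density. -/
noncomputable def stdNormalDensity (x : ℝ) : ℝ :=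
  (2 * Real.pi) ^ (-(1/2 : ℝ)) * Real.exp (-(x ^ 2) / 2)

/-- Squared distance variance `V²(X,X)` of a real random variable with density `φ`:
`V²(X,X) = π⁻² ∫∫ |ψ_X(s+t) − ψ_X(s)ψ_X(t)|² s⁻² t⁻² ds dt`, where `γ₁ = π`. -/
noncomputable def dvar₁ (φ : ℝ → ℝ) : ℝ :=
  (Real.pi * Real.pi)⁻¹ *
    ∫ w : ℝ × ℝ, ‖margCF₁ φ (w.1 + w.2) - margCF₁ φ w.1 * margCF₁ φ w.2‖ ^ 2 /
      (w.1 ^ 2 * w.2 ^ 2)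


open Real Set ENNReal

theorem margCF_stdNormal (s : ℝ) :
    margCF₁ stdNormalDensity s = ((Real.exp (-s ^ 2 / 2) : ℝ) : ℂ) := by
  have h := fourierIntegral_gaussian (b := 1 / 2) (by norm_num) (s : ℂ)
  have hpi : (0 : ℝ) < 2 * π := by positivity
  have hc : ((π : ℂ) / (1 / 2)) ^ (1 / 2 : ℂ) = (((2 * π) ^ (1 / 2 : ℝ) : ℝ) : ℂ) := by
    rw [Complex.ofReal_cpow hpi.le]
    congr 1
    · push_cast; ring
    · push_cast; ring
  unfold margCF₁ stdNormalDensity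
  have e : ∀ x : ℝ, Complex.exp (Complex.I * (s * x)) *
      (((2 * π) ^ (-(1/2 : ℝ)) * Real.exp (-(x ^ 2) / 2) : ℝ) : ℂ) =
      (((2 * π) ^ (-(1/2 : ℝ)) : ℝ) : ℂ) *
      (Complex.exp (Complex.I * s * x) * Complex.exp (-(1 / 2) * (x : ℂ) ^ 2)) := by
    intro x
    rw [Complex.ofReal_mul, Complex.ofReal_exp]
    have e1 : (((-(x ^ 2) / 2 : ℝ)) : ℂ) = -(1 / 2) * (x : ℂ) ^ 2 := by push_cast; ring
    rw [e1, ← mul_assoc Complex.I]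
    ring
  simp_rw [e]
  rw [integral_const_mul, h, hc, ← mul_assoc, ← Complex.ofReal_mul, ← Real.rpow_add hpi]
  norm_num

theorem lintegral_exp_unit {x : ℝ} (hx : x ≠ 0) :
    ∫⁻ a in Ioo (0 : ℝ) 1, ENNReal.ofReal (Real.exp (-(a * x))) =
      ENNReal.ofReal ((1 - Real.exp (-x)) / x) := by
  have hi : IntervalIntegrable (fun a : ℝ => Real.exp (-(a * x))) volume 0 1 :=
    Continuous.intervalIntegrable (by fun_prop) _ _
  rw [← ofReal_integral_eq_lintegral_ofReal, ← integral_Ioc_eq_integral_Ioo,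
    ← intervalIntegral.integral_of_le zero_le_one]
  · congr 1
    rw [intervalIntegral.integral_eq_sub_of_hasDerivAt
      (f := fun a => - Real.exp (-(a * x)) / x) _ hi]
    · simp; ring
    · intro a _
      have := ((((hasDerivAt_id a).mul_const x).neg).exp.neg).div_const x
      refine this.congr_deriv ?_
      simp only [Pi.neg_apply, id]
      field_simp
  · exact ((intervalIntegrable_iff_integrableOn_Ioo_of_le zero_le_one).1 hi)
  · exact Filter.Eventually.of_forall fun a => (Real.exp_pos _).le

theorem lintegral_gaussian {b : ℝ} (hb : 0 < b) :
    ∫⁻ x : ℝ, ENNReal.ofReal (Real.exp (-b * x ^ 2)) = ENNReal.ofReal (√(π / b)) := by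
  rw [← integral_gaussian, ofReal_integral_eq_lintegral_ofReal (integrable_exp_neg_mul_sq hb)]
  exact Filter.Eventually.of_forall fun a => (Real.exp_pos _).le

theorem lintegral_gaussian_plane {c : ℝ} (h0 : 0 ≤ c) (h2 : c < 2) :
    ∫⁻ w : ℝ × ℝ, ENNReal.ofReal (Real.exp (-(w.1 ^ 2 + w.2 ^ 2 + c * (w.1 * w.2)))) =
      ENNReal.ofReal (2 * π * (1 / √(4 - c ^ 2))) := by
  have hb : 0 < 1 - c ^ 2 / 4 := by nlinarith
  have hb' : 0 < 4 - c ^ 2 := by nlinarith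
  rw [Measure.volume_eq_prod, lintegral_prod _ (by fun_prop)]
  -- complete the square in the second variable and translate
  have key : ∀ s : ℝ, ∫⁻ t : ℝ, ENNReal.ofReal (Real.exp (-(s ^ 2 + t ^ 2 + c * (s * t)))) =
      ENNReal.ofReal (Real.exp (-(1 - c ^ 2 / 4) * s ^ 2)) * ENNReal.ofReal (√(π / 1)) := by
    intro s
    rw [← lintegral_gaussian one_pos,
      ← lintegral_add_right_eq_self (fun t : ℝ => ENNReal.ofReal (Real.exp (-1 * t ^ 2)))
        (c * s / 2), ← lintegral_const_mul _ (by fun_prop)]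
    refine lintegral_congr fun t => ?_
    rw [← ENNReal.ofReal_mul (Real.exp_pos _).le, ← Real.exp_add]
    congr 2
    ring
  simp only [key]
  rw [lintegral_mul_const _ (by fun_prop), lintegral_gaussian hb,
    ← ENNReal.ofReal_mul (by positivity)]
  congr 1
  have e : π / (1 - c ^ 2 / 4) = (2 ^ 2 * π) / (4 - c ^ 2) := by field_simp; norm_num
  rw [e, Real.sqrt_div (by positivity), Real.sqrt_mul (by positivity),
    Real.sqrt_sq (by norm_num), div_one]
  have := Real.mul_self_sqrt Real.pi_pos.le
  rw [div_mul_eq_mul_div, mul_assoc, this]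
  ring

theorem hasDerivAt_arcsin_half {x : ℝ} (h0 : -2 < x) (h2 : x < 2) :
    HasDerivAt (fun y => Real.arcsin (y / 2)) (1 / √(4 - x ^ 2)) x := by
  have h := (Real.hasDerivAt_arcsin (x := x / 2) (by linarith) (by linarith)).comp x
    ((hasDerivAt_id x).div_const 2)
  refine h.congr_deriv ?_
  have hb' : 0 < 4 - x ^ 2 := by nlinarith
  have e : 1 - (x / 2) ^ 2 = (4 - x ^ 2) / 2 ^ 2 := by ring
  rw [e, Real.sqrt_div hb'.le, Real.sqrt_sq (by norm_num)]
  have := Real.sqrt_pos.2 hb'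
  field_simp

/-- A primitive of `x ↦ arcsin (x / 2)`. -/
noncomputable def arcsinPrim (x : ℝ) : ℝ := x * Real.arcsin (x / 2) + √(4 - x ^ 2)

theorem continuous_arcsinPrim : Continuous arcsinPrim := by
  unfold arcsinPrim
  have := Real.continuous_arcsin
  fun_prop

theorem hasDerivAt_arcsinPrim {x : ℝ} (h0 : -2 < x) (h2 : x < 2) :
    HasDerivAt arcsinPrim (Real.arcsin (x / 2)) x := by
  have hb' : 0 < 4 - x ^ 2 := by nlinarith
  have h := ((hasDerivAt_id x).mul (hasDerivAt_arcsin_half h0 h2)).add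
    ((((hasDerivAt_id x).pow 2).const_sub 4).sqrt (by simpa using hb'.ne'))
  refine h.congr_deriv ?_
  have := Real.sqrt_pos.2 hb'
  simp
  field_simp
  ring

theorem lintegral_inner {b : ℝ} (h0 : 0 < b) (h1 : b < 1) :
    ∫⁻ a in Ioo (0 : ℝ) 1, ENNReal.ofReal (2 * π * (1 / √(4 - (b + a) ^ 2))) =
      ENNReal.ofReal (2 * π * (Real.arcsin ((b + 1) / 2) - Real.arcsin (b / 2))) := by
  have hi : IntervalIntegrable (fun a : ℝ => 2 * π * (1 / √(4 - (b + a) ^ 2))) volume 0 1 := by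
    apply ContinuousOn.intervalIntegrable
    rw [uIcc_of_le zero_le_one]
    refine ContinuousOn.mul continuousOn_const (ContinuousOn.div continuousOn_const
      (by fun_prop) fun a ha => ?_)
    have : 0 < 4 - (b + a) ^ 2 := by nlinarith [ha.1, ha.2]
    exact (Real.sqrt_pos.2 this).ne'
  rw [← ofReal_integral_eq_lintegral_ofReal, ← integral_Ioc_eq_integral_Ioo,
    ← intervalIntegral.integral_of_le zero_le_one]
  · congr 1
    rw [intervalIntegral.integral_eq_sub_of_hasDerivAt
      (f := fun a => 2 * π * Real.arcsin ((b + a) / 2)) _ hi]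
    · simp; ring
    · intro a ha
      rw [uIcc_of_le zero_le_one] at ha
      exact (HasDerivAt.comp_const_add b a (hasDerivAt_arcsin_half (by linarith [ha.1])
        (by linarith [ha.2]))).const_mul _
  · exact ((intervalIntegrable_iff_integrableOn_Ioo_of_le zero_le_one).1 hi)
  · exact Filter.Eventually.of_forall fun a => by positivity

theorem arcsin_half_one : Real.arcsin (1 / 2) = π / 6 := by
  rw [← Real.sin_pi_div_six, Real.arcsin_sin] <;> linarith [Real.pi_pos]

theorem lintegral_outer :
    ∫⁻ b in Ioo (0 : ℝ) 1, ENNReal.ofReal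
      (2 * π * (Real.arcsin ((b + 1) / 2) - Real.arcsin (b / 2))) =
      ENNReal.ofReal (2 * π * (2 * π / 3 - 2 * √3 + 2)) := by
  have hc := Real.continuous_arcsin
  have hi : IntervalIntegrable (fun b : ℝ =>
      2 * π * (Real.arcsin ((b + 1) / 2) - Real.arcsin (b / 2))) volume 0 1 :=
    Continuous.intervalIntegrable (by fun_prop) _ _
  rw [← ofReal_integral_eq_lintegral_ofReal, ← integral_Ioc_eq_integral_Ioo,
    ← intervalIntegral.integral_of_le zero_le_one]
  · congr 1
    have hp := continuous_arcsinPrim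
    rw [intervalIntegral.integral_eq_sub_of_hasDerivAt_of_le zero_le_one
      (f := fun b => 2 * π * (arcsinPrim (b + 1) - arcsinPrim b)) (by fun_prop) _ hi]
    · have e0 : arcsinPrim 0 = 2 := by
        have : (4 : ℝ) = 2 ^ 2 := by norm_num
        simp [arcsinPrim, this]
      have e1 : arcsinPrim 1 = π / 6 + √3 := by
        unfold arcsinPrim
        rw [arcsin_half_one]; norm_num
      have e2 : arcsinPrim 2 = π := by
        unfold arcsinPrim
        norm_num; ring
      norm_num [e0, e1, e2]; ring
    · intro b hb
      exact ((HasDerivAt.comp_add_const b 1 (hasDerivAt_arcsinPrim (by linarith [hb.1])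
        (by linarith [hb.2]))).sub
        (hasDerivAt_arcsinPrim (by linarith [hb.1]) (by linarith [hb.2]))).const_mul _
  · exact ((intervalIntegrable_iff_integrableOn_Ioo_of_le zero_le_one).1 hi)
  · exact Filter.Eventually.of_forall fun b => by
      have := Real.monotone_arcsin (show b / 2 ≤ (b + 1) / 2 by linarith)
      have := sub_nonneg.2 this
      positivity

/-- Off the axes, the integrand of the distance variance is a mixture of unnormalised Gaussian
densities with cross term `(a + b) s t`, which is what makes Tonelli applicable. -/
theorem integrand_eq {s t : ℝ} (hs : s ≠ 0) (ht : t ≠ 0) :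
    ENNReal.ofReal (‖margCF₁ stdNormalDensity (s + t) -
      margCF₁ stdNormalDensity s * margCF₁ stdNormalDensity t‖ ^ 2 / (s ^ 2 * t ^ 2)) =
    ∫⁻ b in Ioo (0 : ℝ) 1, ∫⁻ a in Ioo (0 : ℝ) 1,
      ENNReal.ofReal (Real.exp (-(s ^ 2 + t ^ 2 + (b + a) * (s * t)))) := by
  have hx : s * t ≠ 0 := mul_ne_zero hs ht
  have e : ∀ a b : ℝ, ENNReal.ofReal (Real.exp (-(s ^ 2 + t ^ 2 + (b + a) * (s * t)))) =
      ENNReal.ofReal (Real.exp (-(s ^ 2 + t ^ 2))) *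
        ENNReal.ofReal (Real.exp (-(b * (s * t)))) *
        ENNReal.ofReal (Real.exp (-(a * (s * t)))) := by
    intro a b
    rw [← ENNReal.ofReal_mul (by positivity), ← ENNReal.ofReal_mul (by positivity),
      ← Real.exp_add, ← Real.exp_add]
    congr 2; ring
  have hnn : 0 ≤ (1 - Real.exp (-(s * t))) / (s * t) := by
    rcases lt_or_gt_of_ne hx with h | h
    · exact div_nonneg_of_nonpos (by linarith [Real.one_lt_exp_iff.2 (neg_pos.2 h)]) h.le
    · exact div_nonneg (by linarith [Real.exp_lt_one_iff.2 (neg_lt_zero.2 h)]) h.le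
  have hl : ∀ b : ℝ, ∫⁻ a in Ioo (0 : ℝ) 1,
      ENNReal.ofReal (Real.exp (-(s ^ 2 + t ^ 2 + (b + a) * (s * t)))) =
      ENNReal.ofReal (Real.exp (-(s ^ 2 + t ^ 2))) *
        ENNReal.ofReal (Real.exp (-(b * (s * t)))) *
        ENNReal.ofReal ((1 - Real.exp (-(s * t))) / (s * t)) := by
    intro b
    simp only [e]
    rw [lintegral_const_mul _ (by fun_prop), lintegral_exp_unit hx]
  simp only [hl]
  rw [lintegral_mul_const _ (by fun_prop), lintegral_const_mul _ (by fun_prop),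
    lintegral_exp_unit hx, ← ENNReal.ofReal_mul (by positivity),
    ← ENNReal.ofReal_mul (by positivity)]
  congr 1
  simp only [margCF_stdNormal]
  rw [← Complex.ofReal_mul, ← Complex.ofReal_sub, Complex.norm_real, Real.norm_eq_abs, sq_abs]
  have h1 : Real.exp (-(s + t) ^ 2 / 2) =
      Real.exp (-s ^ 2 / 2) * Real.exp (-t ^ 2 / 2) * Real.exp (-(s * t)) := by
    rw [← Real.exp_add, ← Real.exp_add]; congr 1; ring
  have h2 : Real.exp (-(s ^ 2 + t ^ 2)) =
      (Real.exp (-s ^ 2 / 2) * Real.exp (-t ^ 2 / 2)) ^ 2 := by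
    rw [← Real.exp_add, ← Real.exp_nat_mul]; congr 1; push_cast; ring
  rw [h1, h2]
  field_simp
  ring

theorem lintegral_dvar :
    ∫⁻ w : ℝ × ℝ, ENNReal.ofReal (‖margCF₁ stdNormalDensity (w.1 + w.2) -
      margCF₁ stdNormalDensity w.1 * margCF₁ stdNormalDensity w.2‖ ^ 2 /
        (w.1 ^ 2 * w.2 ^ 2)) =
      ENNReal.ofReal (2 * π * (2 * π / 3 - 2 * √3 + 2)) := by
  -- the axes, where the integrand takes the junk value `0`, are null sets
  have hae1 : ∀ᵐ w : ℝ × ℝ, w.1 ≠ 0 :=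
    Measure.quasiMeasurePreserving_fst.ae (Measure.ae_ne volume 0)
  have hae2 : ∀ᵐ w : ℝ × ℝ, w.2 ≠ 0 :=
    Measure.quasiMeasurePreserving_snd.ae (Measure.ae_ne volume 0)
  have h1 : ∀ᵐ w : ℝ × ℝ, ENNReal.ofReal (‖margCF₁ stdNormalDensity (w.1 + w.2) -
      margCF₁ stdNormalDensity w.1 * margCF₁ stdNormalDensity w.2‖ ^ 2 /
        (w.1 ^ 2 * w.2 ^ 2)) =
      ∫⁻ p, ENNReal.ofReal (Real.exp (-(w.1 ^ 2 + w.2 ^ 2 + (p.1 + p.2) * (w.1 * w.2))))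
        ∂((volume.restrict (Ioo (0 : ℝ) 1)).prod (volume.restrict (Ioo (0 : ℝ) 1))) := by
    filter_upwards [hae1, hae2] with w hw1 hw2
    rw [integrand_eq hw1 hw2, lintegral_prod _ (by fun_prop)]
  rw [lintegral_congr_ae h1, lintegral_lintegral_swap (by fun_prop),
    lintegral_prod _ (Measurable.aemeasurable (Measurable.lintegral_prod_right'
      (f := fun q : (ℝ × ℝ) × (ℝ × ℝ) => ENNReal.ofReal
        (Real.exp (-(q.2.1 ^ 2 + q.2.2 ^ 2 + (q.1.1 + q.1.2) * (q.2.1 * q.2.2)))))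
      (by fun_prop))),
    ← lintegral_outer]
  refine setLIntegral_congr_fun measurableSet_Ioo fun b hb => ?_
  dsimp only
  rw [← lintegral_inner hb.1 hb.2]
  refine setLIntegral_congr_fun measurableSet_Ioo fun a ha => ?_
  exact lintegral_gaussian_plane (by linarith [hb.1, ha.1]) (by linarith [hb.2, ha.2])

/-- **Distance variance of the standard normal distribution**:
`V²(X,X) = 4/3 − 4(√3 − 1)/π`. -/
theorem dvar_std_normal :
    dvar₁ stdNormalDensity = 4 / 3 - 4 * (Real.sqrt 3 - 1) / Real.pi := by
  unfold dvar₁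
  have hm : Measurable fun w : ℝ × ℝ => ‖margCF₁ stdNormalDensity (w.1 + w.2) -
      margCF₁ stdNormalDensity w.1 * margCF₁ stdNormalDensity w.2‖ ^ 2 /
        (w.1 ^ 2 * w.2 ^ 2) := by
    simp only [margCF_stdNormal]
    fun_prop
  rw [integral_eq_lintegral_of_nonneg_ae
    (Filter.Eventually.of_forall fun w => by positivity) hm.aestronglyMeasurable,
    lintegral_dvar, ENNReal.toReal_ofReal]
  · field_simp
    ring
  · have h3 : √3 < 2 := by
      rw [Real.sqrt_lt' (by norm_num)]; norm_num
    have := Real.pi_gt_three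
    exact mul_nonneg (by positivity) (by linarith)
end

section
/- Let |ρ| < 1 and let (X,Y) have joint density φ_{X,Y}(x,y) = (1/2)[φ_{X,Y}(x,y;ρ) + φ_{X,Y}(x,y;−ρ)] = φ_X(x)φ_Y(y) Σ_{n=0}^∞ (ρ^{2n}/(2n)!) H_{2n}(x) H_{2n}(y), where φ_{X,Y}(·,·;ρ) is the bivariate normal density with standard normal marginals and correlation ρ, and φ_X = φ_Y is the standard normal density. Then V²(X,Y) = (4/π) ( (ρ/2) arcsin ρ + (1/2)√(1−ρ²) − ρ arcsin(ρ/2) − √(4−ρ²) + 3/2 ). -/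
/-!
The characteristic function of the mixture is `exp (-(s² + t²)/2) * cosh (ρ s t)`, so the integrand
of the distance covariance is `exp (-s² - t²) (cosh (ρ s t) - 1)² / (s t)²`. Since
`(cosh u - 1)² = (cosh (2u) - 1) / 2 - 2 (cosh u - 1)`, everything reduces to
`F r = ∫∫ exp (-s² - t²) (cosh (2 r s t) - 1) / (s t)²`, at `r = ρ` and `r = ρ / 2`.

Taylor's formula with integral remainder gives
`(cosh (2 r a) - 1) / a² = ∫₀¹ 4 r² (1 - u) cosh (2 u r a) du` (`cosh_sub_one_div_sq`), and by Fubini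
`F r` becomes a one-dimensional integral of the Gaussian integrals
`∫∫ exp (-s² - t²) cosh (2 v s t) = π / √(1 - v²)` (`integral_cosh_gauss`). An explicit
antiderivative then yields `F r = 4π (r arcsin r + √(1 - r²) - 1)` (`integral_core`).
Both this Gaussian integral and the characteristic function are instances of the Fourier transform
of a correlated Gaussian (`fourier_gauss`), obtained by completing the square in each variable.
-/

open MeasureTheory

/-- The `n`-th probabilists' Hermite polynomial, evaluated at `x`. -/
noncomputable def hermiteFn (n : ℕ) (x : ℝ) : ℝ :=
  Polynomial.aeval x (Polynomial.hermite n)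

/-- The positive definite quadratic form `x² + y² - 2ρxy` dominates `(1 - |ρ|)(x² + y²)`. -/
lemma quad_lower (ρ x y : ℝ) :
    (1 - |ρ|) * (x ^ 2 + y ^ 2) ≤ x ^ 2 + y ^ 2 - 2 * ρ * x * y := by
  rcases abs_cases ρ with ⟨h, h'⟩ | ⟨h, h'⟩ <;> rw [h]
  · nlinarith [mul_nonneg h' (sq_nonneg (x - y))]
  · nlinarith [mul_nonneg (neg_nonneg.2 h'.le) (sq_nonneg (x + y))]

lemma integrable_iso_gauss {k : ℝ} (hk : 0 < k) :
    Integrable (fun z : ℝ × ℝ => Real.exp (-k * (z.1 ^ 2 + z.2 ^ 2))) := by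
  have h := (integrable_exp_neg_mul_sq hk).mul_prod (integrable_exp_neg_mul_sq hk)
  refine h.congr (Filter.Eventually.of_forall fun z => ?_)
  simp only [← Real.exp_add]
  ring_nf

lemma integrable_gauss {ρ k : ℝ} (hρ : |ρ| < 1) (hk : 0 < k) :
    Integrable (fun z : ℝ × ℝ =>
      Real.exp (-k * (z.1 ^ 2 + z.2 ^ 2 - 2 * ρ * z.1 * z.2))) := by
  refine (integrable_iso_gauss (mul_pos hk (sub_pos.2 hρ))).mono'
    (by fun_prop) (Filter.Eventually.of_forall fun z => ?_)
  rw [Real.norm_eq_abs, abs_of_pos (Real.exp_pos _)]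
  apply Real.exp_le_exp.2
  nlinarith [mul_le_mul_of_nonneg_left (quad_lower ρ z.1 z.2) hk.le]

lemma integrable_fourier_gauss {ρ k : ℝ} (hρ : |ρ| < 1) (hk : 0 < k) (s t : ℝ) :
    Integrable (fun z : ℝ × ℝ => Complex.exp (Complex.I * (s * z.1 + t * z.2)) *
      (Real.exp (-k * (z.1 ^ 2 + z.2 ^ 2 - 2 * ρ * z.1 * z.2)) : ℝ)) := by
  refine (integrable_gauss hρ hk).mono' (by fun_prop) (Filter.Eventually.of_forall fun z => ?_)
  have : Complex.I * ((s : ℂ) * z.1 + t * z.2) = ((s * z.1 + t * z.2 : ℝ) : ℂ) * Complex.I := by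
    push_cast; ring
  rw [norm_mul, this, Complex.norm_exp_ofReal_mul_I, one_mul, Complex.norm_real,
    Real.norm_eq_abs, abs_of_pos (Real.exp_pos _)]

lemma ofReal_cpow_half {a : ℝ} (ha : 0 ≤ a) : ((a : ℂ)) ^ (1 / 2 : ℂ) = (Real.sqrt a : ℝ) := by
  rw [Real.sqrt_eq_rpow, Complex.ofReal_cpow ha]
  norm_num

/-- Fourier transform of the correlated Gaussian `exp (-k (x² + y² - 2ρxy))`. -/
lemma fourier_gauss {ρ k : ℝ} (hρ : |ρ| < 1) (hk : 0 < k) (s t : ℝ) :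
    ∫ z : ℝ × ℝ, Complex.exp (Complex.I * (s * z.1 + t * z.2)) *
      (Real.exp (-k * (z.1 ^ 2 + z.2 ^ 2 - 2 * ρ * z.1 * z.2)) : ℝ) =
    ((Real.pi / (k * Real.sqrt (1 - ρ ^ 2)) *
      Real.exp (-(s ^ 2 + t ^ 2 + 2 * ρ * s * t) / (4 * k * (1 - ρ ^ 2))) : ℝ) : ℂ) := by
  have hd : 0 < 1 - ρ ^ 2 := sub_pos.2 ((sq_lt_one_iff_abs_lt_one ρ).2 hρ)
  have hkC : (k : ℂ) ≠ 0 := by exact_mod_cast hk.ne'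
  have hdC : (1 - (ρ : ℂ) ^ 2) ≠ 0 := by exact_mod_cast hd.ne'
  have hI : Complex.I ^ 2 = -1 := Complex.I_sq
  have inner : ∀ x : ℝ, ∫ y : ℝ, Complex.exp (Complex.I * (s * x + t * y)) *
      (Real.exp (-k * (x ^ 2 + y ^ 2 - 2 * ρ * x * y)) : ℝ) =
      (Real.sqrt (Real.pi / k) : ℝ) * Complex.exp (((-(k * (1 - ρ ^ 2)) : ℝ) : ℂ) * x ^ 2 +
        (Complex.I * (s + ρ * t)) * x + (-(t : ℂ) ^ 2 / (4 * k))) := by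
    intro x
    have := integral_cexp_quadratic (b := ((-k : ℝ) : ℂ)) (by simpa using hk)
      (2 * k * ρ * x + Complex.I * t) (-k * x ^ 2 + Complex.I * s * x)
    have h2 : (Real.pi : ℂ) / -((-k : ℝ) : ℂ) = ((Real.pi / k : ℝ) : ℂ) := by
      push_cast; ring
    rw [h2, ofReal_cpow_half (by positivity)] at this
    refine Eq.trans (integral_congr_ae (Filter.Eventually.of_forall fun y => ?_)) (this.trans ?_)
    · simp only [Complex.ofReal_exp, ← Complex.exp_add]
      push_cast
      ring_nf
    · congr 2
      push_cast
      field_simp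
      linear_combination (t : ℂ) ^ 2 * hI
  rw [Measure.volume_eq_prod, integral_prod _ (integrable_fourier_gauss hρ hk s t)]
  simp only [inner]
  rw [integral_const_mul, integral_cexp_quadratic (by
    rw [Complex.ofReal_re]; exact neg_lt_zero.2 (mul_pos hk hd))]
  have h2 : (Real.pi : ℂ) / -((-(k * (1 - ρ ^ 2)) : ℝ) : ℂ) =
      ((Real.pi / (k * (1 - ρ ^ 2)) : ℝ) : ℂ) := by
    push_cast; ring
  rw [h2, ofReal_cpow_half (by positivity), ← mul_assoc]
  have hsq : Real.sqrt (Real.pi / k) * Real.sqrt (Real.pi / (k * (1 - ρ ^ 2))) =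
      Real.pi / (k * Real.sqrt (1 - ρ ^ 2)) := by
    rw [← Real.sqrt_mul (by positivity), show Real.pi / k * (Real.pi / (k * (1 - ρ ^ 2))) =
      (Real.pi / k) ^ 2 / (1 - ρ ^ 2) by field_simp, Real.sqrt_div (by positivity),
      Real.sqrt_sq (by positivity)]
    field_simp
  rw [← Complex.ofReal_mul, hsq, Complex.ofReal_mul (Real.pi / _), Complex.ofReal_exp]
  congr 2
  push_cast
  field_simp
  linear_combination ((s : ℂ) + ρ * t) ^ 2 * hI

lemma bvnDensity_eq {ρ : ℝ} (hρ : |ρ| < 1) (x y : ℝ) :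
    bvnDensity ρ x y = (2 * Real.pi * Real.sqrt (1 - ρ ^ 2))⁻¹ *
      Real.exp (-(1 / (2 * (1 - ρ ^ 2))) * (x ^ 2 + y ^ 2 - 2 * ρ * x * y)) := by
  have hd : 0 < 1 - ρ ^ 2 := sub_pos.2 ((sq_lt_one_iff_abs_lt_one ρ).2 hρ)
  rw [bvnDensity, Real.rpow_neg hd.le, ← Real.sqrt_eq_rpow, mul_inv (2 * Real.pi)]
  congr 2
  ring

/-- Characteristic function of the bivariate normal law, with integrability of its integrand. -/
lemma jointCF_bvn {ρ : ℝ} (hρ : |ρ| < 1) (s t : ℝ) :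
    Integrable (fun z : ℝ × ℝ => Complex.exp (Complex.I * (s * z.1 + t * z.2)) *
      (bvnDensity ρ z.1 z.2 : ℝ)) ∧
    jointCF₁ (bvnDensity ρ) s t =
      (Real.exp (-(s ^ 2 + t ^ 2) / 2) * Real.exp (-(ρ * s * t)) : ℝ) := by
  have hd : 0 < 1 - ρ ^ 2 := sub_pos.2 ((sq_lt_one_iff_abs_lt_one ρ).2 hρ)
  have hk : 0 < 1 / (2 * (1 - ρ ^ 2)) := by positivity
  have hf : (fun z : ℝ × ℝ => Complex.exp (Complex.I * (s * z.1 + t * z.2)) *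
      (bvnDensity ρ z.1 z.2 : ℝ)) = fun z : ℝ × ℝ =>
      (((2 * Real.pi * Real.sqrt (1 - ρ ^ 2))⁻¹ : ℝ) : ℂ) *
      (Complex.exp (Complex.I * (s * z.1 + t * z.2)) *
      (Real.exp (-(1 / (2 * (1 - ρ ^ 2))) * (z.1 ^ 2 + z.2 ^ 2 - 2 * ρ * z.1 * z.2)) : ℝ)) := by
    funext z
    rw [bvnDensity_eq hρ, Complex.ofReal_mul]
    ring
  refine ⟨hf ▸ (integrable_fourier_gauss hρ hk s t).const_mul _, ?_⟩
  rw [jointCF₁, hf, integral_const_mul, fourier_gauss hρ hk, ← Complex.ofReal_mul, ← mul_assoc,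
    ← Real.exp_add]
  have hs : 0 < Real.sqrt (1 - ρ ^ 2) := Real.sqrt_pos.2 hd
  have hss := Real.sq_sqrt hd.le
  congr 1
  have h1 : (2 * Real.pi * Real.sqrt (1 - ρ ^ 2))⁻¹ *
      (Real.pi / (1 / (2 * (1 - ρ ^ 2)) * Real.sqrt (1 - ρ ^ 2))) = 1 := by
    have := Real.pi_pos
    field_simp
    rw [hss]
  rw [h1, one_mul]
  congr 1
  field_simp
  ring

lemma jointCF_mix {ρ : ℝ} (hρ : |ρ| < 1) (s t : ℝ) :
    jointCF₁ (fun x y => (1 / 2) * (bvnDensity ρ x y + bvnDensity (-ρ) x y)) s t =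
      (Real.exp (-(s ^ 2 + t ^ 2) / 2) * Real.cosh (ρ * (s * t)) : ℝ) := by
  obtain ⟨i1, e1⟩ := jointCF_bvn hρ s t
  obtain ⟨i2, e2⟩ := jointCF_bvn (ρ := -ρ) (by rwa [abs_neg]) s t
  have : jointCF₁ (fun x y => (1 / 2) * (bvnDensity ρ x y + bvnDensity (-ρ) x y)) s t =
      (1 / 2 : ℂ) * (jointCF₁ (bvnDensity ρ) s t + jointCF₁ (bvnDensity (-ρ)) s t) := by
    simp only [jointCF₁]
    rw [← integral_add i1 i2, ← integral_const_mul]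
    congr 1
    funext z
    push_cast
    ring
  rw [this, e1, e2, Real.cosh_eq]
  push_cast
  ring_nf

lemma integral_gauss {v : ℝ} (hv : |v| < 1) :
    ∫ z : ℝ × ℝ, Real.exp (-1 * (z.1 ^ 2 + z.2 ^ 2 - 2 * v * z.1 * z.2)) =
      Real.pi / Real.sqrt (1 - v ^ 2) := by
  have h := fourier_gauss hv one_pos 0 0
  simp only [Complex.ofReal_zero, zero_mul, add_zero, mul_zero, Complex.exp_zero, one_mul] at h
  rw [integral_complex_ofReal] at h
  have h' := Complex.ofReal_injective h
  rw [h']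
  simp

lemma exp_mul_cosh (v x y : ℝ) : Real.exp (-(x ^ 2 + y ^ 2)) * Real.cosh (2 * v * (x * y)) =
    1 / 2 * (Real.exp (-1 * (x ^ 2 + y ^ 2 - 2 * v * x * y)) +
      Real.exp (-1 * (x ^ 2 + y ^ 2 - 2 * (-v) * x * y))) := by
  rw [Real.cosh_eq, mul_div_assoc', mul_add, ← Real.exp_add, ← Real.exp_add]
  ring_nf

lemma integral_cosh_gauss {v : ℝ} (hv : |v| < 1) :
    ∫ z : ℝ × ℝ, Real.exp (-(z.1 ^ 2 + z.2 ^ 2)) * Real.cosh (2 * v * (z.1 * z.2)) =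
      Real.pi / Real.sqrt (1 - v ^ 2) := by
  have hv' : |-v| < 1 := by rwa [abs_neg]
  simp only [exp_mul_cosh]
  rw [integral_const_mul, integral_add (integrable_gauss hv one_pos)
    (integrable_gauss hv' one_pos), integral_gauss hv, integral_gauss hv', neg_sq]
  ring

/-- Taylor's formula of order two with integral remainder for `cosh`. -/
lemma cosh_sub_one_div_sq (r : ℝ) {a : ℝ} (ha : a ≠ 0) :
    ∫ u in (0 : ℝ)..1, 4 * r ^ 2 * (1 - u) * Real.cosh (2 * (u * r) * a) =
      (Real.cosh (2 * r * a) - 1) / a ^ 2 := by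
  have hder : ∀ u ∈ Set.uIcc (0 : ℝ) 1, HasDerivAt
      (fun u : ℝ => 2 * r * (1 - u) * Real.sinh (2 * (u * r) * a) / a +
        Real.cosh (2 * (u * r) * a) / a ^ 2)
      (4 * r ^ 2 * (1 - u) * Real.cosh (2 * (u * r) * a)) u := by
    intro u _
    have hl : HasDerivAt (fun u : ℝ => 2 * (u * r) * a) (2 * r * a) u := by
      simpa using (((hasDerivAt_id u).mul_const r).const_mul 2).mul_const a
    have h1 : HasDerivAt (fun u : ℝ => 2 * r * (1 - u)) (2 * r * (-1)) u :=
      ((hasDerivAt_id u).const_sub 1).const_mul (2 * r)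
    refine (((h1.mul hl.sinh).div_const a).add (hl.cosh.div_const (a ^ 2))).congr_deriv ?_
    field_simp
    ring
  rw [intervalIntegral.integral_eq_sub_of_hasDerivAt hder
    (Continuous.intervalIntegrable (by fun_prop) _ _)]
  simp
  ring

lemma integral_arcsin {r : ℝ} (hr : |r| < 1) :
    ∫ u in (0 : ℝ)..1, 4 * r ^ 2 * (1 - u) * (Real.pi / Real.sqrt (1 - (u * r) ^ 2)) =
      4 * Real.pi * (r * Real.arcsin r + Real.sqrt (1 - r ^ 2) - 1) := by
  have hlt : ∀ u ∈ Set.uIcc (0 : ℝ) 1, |u * r| < 1 := by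
    intro u hu
    rw [Set.uIcc_of_le zero_le_one] at hu
    rw [abs_mul, abs_of_nonneg hu.1]
    exact (mul_le_of_le_one_left (abs_nonneg r) hu.2).trans_lt hr
  have hpos : ∀ u ∈ Set.uIcc (0 : ℝ) 1, 0 < 1 - (u * r) ^ 2 := fun u hu =>
    sub_pos.2 ((sq_lt_one_iff_abs_lt_one _).2 (hlt u hu))
  have hder : ∀ u ∈ Set.uIcc (0 : ℝ) 1, HasDerivAt
      (fun u : ℝ => 4 * Real.pi * (r * Real.arcsin (u * r) + Real.sqrt (1 - (u * r) ^ 2)))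
      (4 * r ^ 2 * (1 - u) * (Real.pi / Real.sqrt (1 - (u * r) ^ 2))) u := by
    intro u hu
    have hl : HasDerivAt (fun u : ℝ => u * r) r u := by
      simpa using (hasDerivAt_id u).mul_const r
    have hp := hpos u hu
    have hab := abs_lt.1 (hlt u hu)
    have h1 := (Real.hasDerivAt_arcsin hab.1.ne' hab.2.ne).comp u hl
    have h2 := ((hl.pow 2).const_sub 1).sqrt hp.ne'
    refine (((h1.const_mul r).add h2).const_mul (4 * Real.pi)).congr_deriv ?_
    have hs : Real.sqrt (1 - (u * r) ^ 2) ≠ 0 := (Real.sqrt_pos.2 hp).ne'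
    simp only [Pi.pow_apply, Nat.cast_ofNat]
    field_simp
    ring
  have hcont : ContinuousOn
      (fun u : ℝ => 4 * r ^ 2 * (1 - u) * (Real.pi / Real.sqrt (1 - (u * r) ^ 2)))
      (Set.uIcc 0 1) := by
    refine ContinuousOn.mul (by fun_prop) (ContinuousOn.div (by fun_prop) (by fun_prop) ?_)
    exact fun u hu => (Real.sqrt_pos.2 (hpos u hu)).ne'
  rw [intervalIntegral.integral_eq_sub_of_hasDerivAt hder hcont.intervalIntegrable]
  simp
  ring

/-- Integrability on the product space, as needed to apply Fubini to the Taylor remainder. -/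
lemma integrable_triple {r : ℝ} (hr : |r| < 1) :
    Integrable (Function.uncurry fun (z : ℝ × ℝ) (u : ℝ) => Real.exp (-(z.1 ^ 2 + z.2 ^ 2)) *
      (4 * r ^ 2 * (1 - u) * Real.cosh (2 * (u * r) * (z.1 * z.2))))
      ((volume : Measure (ℝ × ℝ)).prod (volume.restrict (Set.Ioc (0 : ℝ) 1))) := by
  have hg := ((integrable_iso_gauss (sub_pos.2 hr)).const_mul (4 * r ^ 2)).mul_prod
    (integrable_const (μ := volume.restrict (Set.Ioc (0 : ℝ) 1)) (1 : ℝ))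
  refine hg.mono' (Continuous.aestronglyMeasurable (by unfold Function.uncurry; fun_prop)) ?_
  have hmem : ∀ᵐ w : (ℝ × ℝ) × ℝ ∂((volume : Measure (ℝ × ℝ)).prod
      (volume.restrict (Set.Ioc (0 : ℝ) 1))), w.2 ∈ Set.Ioc (0 : ℝ) 1 :=
    Measure.quasiMeasurePreserving_snd.ae (ae_restrict_mem measurableSet_Ioc)
  filter_upwards [hmem] with w hw
  obtain ⟨⟨x, y⟩, u⟩ := w
  simp only at hw
  simp only [Function.uncurry]
  have h1u : 0 ≤ 1 - u := sub_nonneg.2 hw.2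
  have hur : |u * r| ≤ |r| := by
    rw [abs_mul, abs_of_pos hw.1]
    exact mul_le_of_le_one_left (abs_nonneg r) hw.2
  -- both exponentials in the hyperbolic cosine are controlled by the lower bound on the form
  have hexp : ∀ v : ℝ, |v| ≤ |r| → Real.exp (-1 * (x ^ 2 + y ^ 2 - 2 * v * x * y)) ≤
      Real.exp (-(1 - |r|) * (x ^ 2 + y ^ 2)) := by
    intro v hv
    apply Real.exp_le_exp.2
    nlinarith [quad_lower v x y, mul_le_mul_of_nonneg_right hv
      (by positivity : (0 : ℝ) ≤ x ^ 2 + y ^ 2)]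
  have hb : Real.exp (-(x ^ 2 + y ^ 2)) * Real.cosh (2 * (u * r) * (x * y)) ≤
      Real.exp (-(1 - |r|) * (x ^ 2 + y ^ 2)) := by
    rw [exp_mul_cosh]
    linarith [hexp (u * r) hur, hexp (-(u * r)) (by rwa [abs_neg])]
  have hnn : 0 ≤ Real.exp (-(x ^ 2 + y ^ 2)) * Real.cosh (2 * (u * r) * (x * y)) :=
    mul_nonneg (Real.exp_pos _).le (Real.cosh_pos _).le
  have heq : Real.exp (-(x ^ 2 + y ^ 2)) *
      (4 * r ^ 2 * (1 - u) * Real.cosh (2 * (u * r) * (x * y))) = 4 * r ^ 2 * (1 - u) *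
      (Real.exp (-(x ^ 2 + y ^ 2)) * Real.cosh (2 * (u * r) * (x * y))) := by ring
  rw [heq, Real.norm_eq_abs, abs_of_nonneg (by positivity), mul_one]
  refine mul_le_mul ?_ hb hnn (by positivity)
  exact mul_le_of_le_one_right (by positivity) (by linarith [hw.1])

/-- The coordinate axes are negligible in the plane. -/
lemma ae_mul_ne_zero : ∀ᵐ z : ℝ × ℝ, z.1 * z.2 ≠ 0 := by
  have h : ∀ᵐ x : ℝ, x ≠ 0 := Measure.ae_ne volume 0
  have h1 : ∀ᵐ z : ℝ × ℝ, z.1 ≠ 0 := Measure.quasiMeasurePreserving_fst.ae h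
  have h2 : ∀ᵐ z : ℝ × ℝ, z.2 ≠ 0 := Measure.quasiMeasurePreserving_snd.ae h
  filter_upwards [h1, h2] with z ha hb using mul_ne_zero ha hb

/-- The basic integral `F r`, to which the distance covariance reduces. -/
lemma integral_core {r : ℝ} (hr : |r| < 1) :
    Integrable (fun z : ℝ × ℝ => Real.exp (-(z.1 ^ 2 + z.2 ^ 2)) *
      ((Real.cosh (2 * r * (z.1 * z.2)) - 1) / (z.1 * z.2) ^ 2)) ∧
    ∫ z : ℝ × ℝ, Real.exp (-(z.1 ^ 2 + z.2 ^ 2)) *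
      ((Real.cosh (2 * r * (z.1 * z.2)) - 1) / (z.1 * z.2) ^ 2) =
      4 * Real.pi * (r * Real.arcsin r + Real.sqrt (1 - r ^ 2) - 1) := by
  have hT := integrable_triple hr
  have hae : (fun z : ℝ × ℝ => ∫ u in Set.Ioc (0 : ℝ) 1, Real.exp (-(z.1 ^ 2 + z.2 ^ 2)) *
      (4 * r ^ 2 * (1 - u) * Real.cosh (2 * (u * r) * (z.1 * z.2)))) =ᵐ[volume]
      fun z : ℝ × ℝ => Real.exp (-(z.1 ^ 2 + z.2 ^ 2)) *
      ((Real.cosh (2 * r * (z.1 * z.2)) - 1) / (z.1 * z.2) ^ 2) := by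
    filter_upwards [ae_mul_ne_zero] with z hz
    rw [integral_const_mul, ← intervalIntegral.integral_of_le zero_le_one,
      cosh_sub_one_div_sq r hz]
  refine ⟨hT.integral_prod_left.congr hae, ?_⟩
  rw [← integral_congr_ae hae, integral_integral_swap hT, ← integral_arcsin hr,
    intervalIntegral.integral_of_le zero_le_one]
  refine setIntegral_congr_fun measurableSet_Ioc fun u hu => ?_
  have hur : |u * r| < 1 := by
    rw [abs_mul, abs_of_pos hu.1]
    exact (mul_le_of_le_one_left (abs_nonneg r) hu.2).trans_lt hr
  rw [← integral_cosh_gauss hur, ← integral_const_mul]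
  congr 1
  funext z
  ring

/-- **Distance covariance for the symmetric mixture of bivariate normals**: if `(X,Y)` has
joint density `½[φ(x,y;ρ) + φ(x,y;−ρ)] = φ(x)φ(y) Σ_n (ρ^{2n}/(2n)!) H_{2n}(x)H_{2n}(y)`,
then `V²(X,Y) = (4/π)((ρ/2) arcsin ρ + ½√(1−ρ²) − ρ arcsin(ρ/2) − √(4−ρ²) + 3/2)`. -/
theorem dcov_bvn_mixture (ρ : ℝ) (hρ : |ρ| < 1) (φXY : ℝ → ℝ → ℝ)
    (hmix : ∀ x y : ℝ, φXY x y = (1 / 2) * (bvnDensity ρ x y + bvnDensity (-ρ) x y))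
    (hexp : ∀ x y : ℝ, φXY x y = stdNormalDensity x * stdNormalDensity y *
      ∑' n : ℕ, ρ ^ (2 * n) / (Nat.factorial (2 * n)) * hermiteFn (2 * n) x *
        hermiteFn (2 * n) y) :
    dcov₁ φXY = 4 / Real.pi *
      (ρ / 2 * Real.arcsin ρ + 1 / 2 * Real.sqrt (1 - ρ ^ 2) - ρ * Real.arcsin (ρ / 2) -
        Real.sqrt (4 - ρ ^ 2) + 3 / 2) := by
  have hφ : φXY = fun x y => (1 / 2) * (bvnDensity ρ x y + bvnDensity (-ρ) x y) := by
    funext x y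
    exact hmix x y
  have hρ2 : |ρ / 2| < 1 := by
    rw [abs_div, abs_two]
    linarith
  obtain ⟨i1, e1⟩ := integral_core hρ
  obtain ⟨i2, e2⟩ := integral_core hρ2
  have hint : ∀ w : ℝ × ℝ,
      ‖jointCF₁ φXY w.1 w.2 - jointCF₁ φXY w.1 0 * jointCF₁ φXY 0 w.2‖ ^ 2 /
        (w.1 ^ 2 * w.2 ^ 2) =
      1 / 2 * (Real.exp (-(w.1 ^ 2 + w.2 ^ 2)) *
        ((Real.cosh (2 * ρ * (w.1 * w.2)) - 1) / (w.1 * w.2) ^ 2)) -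
      2 * (Real.exp (-(w.1 ^ 2 + w.2 ^ 2)) *
        ((Real.cosh (2 * (ρ / 2) * (w.1 * w.2)) - 1) / (w.1 * w.2) ^ 2)) := by
    rintro ⟨s, t⟩
    simp only [hφ, jointCF_mix hρ]
    rw [← Complex.ofReal_mul, ← Complex.ofReal_sub, Complex.norm_real, Real.norm_eq_abs, sq_abs]
    have h1 : Real.exp (-(s ^ 2 + t ^ 2)) = Real.exp (-(s ^ 2 + t ^ 2) / 2) ^ 2 := by
      rw [← Real.exp_nat_mul]
      congr 1
      push_cast
      ring
    have h2 : Real.exp (-(s ^ 2 + 0 ^ 2) / 2) * Real.exp (-(0 ^ 2 + t ^ 2) / 2) =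
        Real.exp (-(s ^ 2 + t ^ 2) / 2) := by
      rw [← Real.exp_add]
      congr 1
      ring
    have h3 : Real.cosh (2 * ρ * (s * t)) = 2 * Real.cosh (ρ * (s * t)) ^ 2 - 1 := by
      rw [mul_assoc, Real.cosh_two_mul, Real.sinh_sq]
      ring
    have h4 : 2 * (ρ / 2) * (s * t) = ρ * (s * t) := by ring
    simp only [mul_zero, zero_mul, Real.cosh_zero, mul_one]
    rw [h2, h1, h3, h4, mul_pow s t 2]
    ring
  have h4 : Real.sqrt (1 - (ρ / 2) ^ 2) = Real.sqrt (4 - ρ ^ 2) / 2 := by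
    rw [show 1 - (ρ / 2) ^ 2 = (4 - ρ ^ 2) / 2 ^ 2 by ring,
      Real.sqrt_div' _ (by positivity), Real.sqrt_sq (by norm_num)]
  rw [dcov₁]
  simp only [hint]
  rw [integral_sub (i1.const_mul _) (i2.const_mul _), integral_const_mul, integral_const_mul,
    e1, e2, h4]
  have := Real.pi_pos
  field_simp
  ring
end
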